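/- There exists a constant C > 0, depending only on α and β, such that for every real Dirichlet quasimode datum (u, λ, f) on the stadium S, one has ‖u‖²_{L²(S)} ≤ C ( ∫_{∂S ∩ W} w |∂_N u|² dl + ‖f‖²_{L²(S)} ). -/

import Mathlib

open MeasureTheory Real Set Filter

noncomputable section

/-- Partial derivative in the first (x) variable. -/
def pdx (u : ℝ × ℝ → ℝ) (p : ℝ × ℝ) : ℝ := deriv (fun t => u (t, p.2)) p.1

/-- Partial derivative in the second (y) variable. -/
def pdy (u : ℝ × ℝ → ℝ) (p : ℝ × ℝ) : ℝ := deriv (fun t => u (p.1, t)) p.2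

/-- The positive Laplacian `Δu = -u_xx - u_yy`. -/
def lap (u : ℝ × ℝ → ℝ) (p : ℝ × ℝ) : ℝ := -(pdx (pdx u) p) - (pdy (pdy u) p)

/-- The central rectangle `R = [-α,α] × [-β,β]`. -/
def Rect (α β : ℝ) : Set (ℝ × ℝ) := Icc (-α) α ×ˢ Icc (-β) β

/-- The wings `W = W₊ ∪ W₋`, two half-discs of radius β centered at `(±α, 0)`. -/
def Wings (α β : ℝ) : Set (ℝ × ℝ) :=
  {p | (p.1 - α) ^ 2 + p.2 ^ 2 ≤ β ^ 2 ∧ α ≤ p.1} ∪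
  {p | (p.1 + α) ^ 2 + p.2 ^ 2 ≤ β ^ 2 ∧ p.1 ≤ -α}

/-- The Bunimovich stadium `S = R ∪ W`. -/
def Stadium (α β : ℝ) : Set (ℝ × ℝ) := Rect α β ∪ Wings α β

/-- The boundary `∂S`: two horizontal segments and two semicircles. -/
def StadiumBoundary (α β : ℝ) : Set (ℝ × ℝ) :=
  {p | |p.1| ≤ α ∧ (p.2 = β ∨ p.2 = -β)} ∪
  {p | (|p.1| - α) ^ 2 + p.2 ^ 2 = β ^ 2 ∧ α ≤ |p.1|}

/-- Boundary integral `∫_{∂S} g dl` of an integrand `g` depending on the boundary point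
and the outward unit normal at that point. -/
def bdryInt (α β : ℝ) (g : ℝ × ℝ → ℝ × ℝ → ℝ) : ℝ :=
  (∫ x in (-α)..α, (g (x, β) (0, 1) + g (x, -β) (0, -1))) +
  β * ∫ θ in (-(π / 2))..(π / 2),
    (g (α + β * cos θ, β * sin θ) (cos θ, sin θ) +
     g (-(α + β * cos θ), β * sin θ) (-cos θ, sin θ))

/-- Boundary integral `∫_{∂S ∩ W} g dl` over the two semicircles only. -/
def bdryIntW (α β : ℝ) (g : ℝ × ℝ → ℝ × ℝ → ℝ) : ℝ :=
  β * ∫ θ in (-(π / 2))..(π / 2),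
    (g (α + β * cos θ, β * sin θ) (cos θ, sin θ) +
     g (-(α + β * cos θ), β * sin θ) (-cos θ, sin θ))

/-- The normal derivative `∂_N u = n₁ ∂_x u + n₂ ∂_y u` at a boundary point `p`
with outward unit normal `n`. -/
def nderiv (u : ℝ × ℝ → ℝ) (p n : ℝ × ℝ) : ℝ := n.1 * pdx u p + n.2 * pdy u p

/-- A real Dirichlet quasimode datum `(u, λ, f)` on the stadium: `λ > 0`, `u` smooth on a
neighborhood of `S`, `u = 0` on `∂S`, and `(Δ - λ²) u = f` on `S`. -/
structure QMDatum (α β : ℝ) where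
  u : ℝ × ℝ → ℝ
  lam : ℝ
  f : ℝ × ℝ → ℝ
  lam_pos : 0 < lam
  smooth : ∃ V : Set (ℝ × ℝ), IsOpen V ∧ Stadium α β ⊆ V ∧ ContDiffOn ℝ (⊤ : ℕ∞) u V
  dirichlet : ∀ p ∈ StadiumBoundary α β, u p = 0
  eqn : ∀ p ∈ Stadium α β, lap u p - lam ^ 2 * u p = f p

lemma S_slice_y {α β : ℝ} (hα : 0 < α) (hβ : 0 < β) (p : ℝ × ℝ) :
    p ∈ Stadium α β ↔ p.2 ∈ Icc (-β) β ∧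
      p.1 ∈ Icc (-(α + √(β ^ 2 - p.2 ^ 2))) (α + √(β ^ 2 - p.2 ^ 2)) := by
  obtain ⟨x, y⟩ := p
  simp only [Stadium, Rect, Wings, mem_union, mem_prod, mem_ofPred_eq, mem_Icc]
  have h0 := Real.sqrt_nonneg (β ^ 2 - y ^ 2)
  constructor
  · rintro (⟨⟨h1, h2⟩, h3, h4⟩ | ⟨h1, h2⟩ | ⟨h1, h2⟩)
    · exact ⟨⟨h3, h4⟩, by linarith, by linarith⟩
    · have hy : |y| ≤ β := abs_le_of_sq_le_sq (by nlinarith) hβ.le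
      have : x - α ≤ √(β ^ 2 - y ^ 2) := Real.le_sqrt_of_sq_le (by linarith)
      exact ⟨abs_le.1 hy, by linarith, by linarith⟩
    · have hy : |y| ≤ β := abs_le_of_sq_le_sq (by nlinarith) hβ.le
      have : -(x + α) ≤ √(β ^ 2 - y ^ 2) := Real.le_sqrt_of_sq_le (by nlinarith)
      exact ⟨abs_le.1 hy, by linarith, by linarith⟩
  · rintro ⟨⟨h3, h4⟩, h1, h2⟩
    have hs := Real.sq_sqrt (show 0 ≤ β ^ 2 - y ^ 2 by nlinarith)
    by_cases c1 : α ≤ x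
    · right; left
      exact ⟨by nlinarith, c1⟩
    · by_cases c2 : x ≤ -α
      · right; right
        exact ⟨by nlinarith, c2⟩
      · left
        exact ⟨⟨by linarith, by linarith⟩, h3, h4⟩

lemma S_slice_x {α β : ℝ} (hα : 0 < α) (hβ : 0 < β) (p : ℝ × ℝ) :
    p ∈ Stadium α β ↔ p.1 ∈ Icc (-(α + β)) (α + β) ∧
      p.2 ∈ Icc (-(√(β ^ 2 - (max (|p.1| - α) 0) ^ 2))) (√(β ^ 2 - (max (|p.1| - α) 0) ^ 2)) := by
  obtain ⟨x, y⟩ := p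
  simp only [Stadium, Rect, Wings, mem_union, mem_prod, mem_ofPred_eq]
  rw [mem_Icc, mem_Icc, mem_Icc, mem_Icc, ← abs_le, ← abs_le, ← abs_le, ← abs_le]
  constructor
  · rintro (⟨h1, h3⟩ | ⟨h1, h2⟩ | ⟨h1, h2⟩)
    · rw [max_eq_right (by linarith)]
      refine ⟨by linarith, ?_⟩
      simpa [Real.sqrt_sq hβ.le] using h3
    · rw [abs_of_nonneg (by linarith : 0 ≤ x), max_eq_left (by linarith)]
      exact ⟨by nlinarith, Real.abs_le_sqrt (by linarith)⟩
    · rw [abs_of_nonpos (by linarith : x ≤ 0), max_eq_left (by linarith)]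
      exact ⟨by nlinarith, Real.abs_le_sqrt (by nlinarith)⟩
  · rintro ⟨h1, h2⟩
    by_cases c : |x| ≤ α
    · rw [max_eq_right (by linarith)] at h2
      left
      refine ⟨c, ?_⟩
      simpa [Real.sqrt_sq hβ.le] using h2
    · push Not at c
      rw [max_eq_left (by linarith)] at h2
      have h3 : y ^ 2 ≤ β ^ 2 - (|x| - α) ^ 2 := by
        rw [← sq_abs y]
        calc |y| ^ 2 ≤ (√(β ^ 2 - (|x| - α) ^ 2)) ^ 2 := by gcongr
          _ = _ := Real.sq_sqrt (by nlinarith)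
      right
      rcases le_total 0 x with hx | hx
      · rw [abs_of_nonneg hx] at *
        exact Or.inl ⟨by linarith, c.le⟩
      · rw [abs_of_nonpos hx] at *
        exact Or.inr ⟨by nlinarith, by linarith⟩

lemma S_compact {α β : ℝ} (hα : 0 < α) (hβ : 0 < β) : IsCompact (Stadium α β) := by
  apply IsCompact.union (isCompact_Icc.prod isCompact_Icc)
  have hc : IsClosed (Wings α β) := by
    apply IsClosed.union
    · have h1 : IsClosed {p : ℝ × ℝ | (p.1 - α) ^ 2 + p.2 ^ 2 ≤ β ^ 2} :=
        isClosed_le (by fun_prop) (by fun_prop)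
      have h2 : IsClosed {p : ℝ × ℝ | α ≤ p.1} := isClosed_le (by fun_prop) (by fun_prop)
      exact h1.inter h2
    · have h1 : IsClosed {p : ℝ × ℝ | (p.1 + α) ^ 2 + p.2 ^ 2 ≤ β ^ 2} :=
        isClosed_le (by fun_prop) (by fun_prop)
      have h2 : IsClosed {p : ℝ × ℝ | p.1 ≤ -α} := isClosed_le (by fun_prop) (by fun_prop)
      exact h1.inter h2
  apply IsCompact.of_isClosed_subset
    (isCompact_Icc.prod isCompact_Icc : IsCompact (Icc (-(α+β)) (α+β) ×ˢ Icc (-β) β)) hc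
  intro p hp
  have hS : p ∈ Stadium α β := Or.inr hp
  exact ⟨((S_slice_x hα hβ p).1 hS).1, ((S_slice_y hα hβ p).1 hS).1⟩

lemma fubini_y {S : Set (ℝ × ℝ)} (hS : IsCompact S) {c : ℝ} (hc : 0 ≤ c) {a : ℝ → ℝ}
    (ha : ∀ y, 0 ≤ a y) (h : ∀ p : ℝ × ℝ, p ∈ S ↔ p.2 ∈ Icc (-c) c ∧ p.1 ∈ Icc (-(a p.2)) (a p.2))
    {G : ℝ × ℝ → ℝ} (hG : Continuous G) :
    ∫ p in S, G p = ∫ y in (-c)..c, ∫ x in (-(a y))..(a y), G (x, y) := by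
  have hint : Integrable (S.indicator G) (volume.prod volume) :=
    (integrable_indicator_iff hS.measurableSet).2 (hG.continuousOn.integrableOn_compact hS)
  rw [← integral_indicator hS.measurableSet, Measure.volume_eq_prod, integral_prod_symm _ hint,
    intervalIntegral.integral_of_le (by linarith), ← integral_Icc_eq_integral_Ioc,
    ← integral_indicator measurableSet_Icc]
  congr 1
  ext y
  by_cases hy : y ∈ Icc (-c) c
  · rw [indicator_of_mem hy, intervalIntegral.integral_of_le (by linarith [ha y]),
      ← integral_Icc_eq_integral_Ioc, ← integral_indicator measurableSet_Icc]
    congr 1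
    ext x
    simp only [indicator, h, hy, true_and]
  · rw [indicator_of_notMem hy]
    have : (fun x => S.indicator G (x, y)) = fun _ => 0 := by
      ext x
      apply indicator_of_notMem
      rw [h]
      exact fun h => hy h.1
    simp [this]

lemma fubini_x {S : Set (ℝ × ℝ)} (hS : IsCompact S) {c : ℝ} (hc : 0 ≤ c) {a : ℝ → ℝ}
    (ha : ∀ y, 0 ≤ a y) (h : ∀ p : ℝ × ℝ, p ∈ S ↔ p.1 ∈ Icc (-c) c ∧ p.2 ∈ Icc (-(a p.1)) (a p.1))
    {G : ℝ × ℝ → ℝ} (hG : Continuous G) :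
    ∫ p in S, G p = ∫ x in (-c)..c, ∫ y in (-(a x))..(a x), G (x, y) := by
  have hint : Integrable (S.indicator G) (volume.prod volume) :=
    (integrable_indicator_iff hS.measurableSet).2 (hG.continuousOn.integrableOn_compact hS)
  rw [← integral_indicator hS.measurableSet, Measure.volume_eq_prod, integral_prod _ hint,
    intervalIntegral.integral_of_le (by linarith), ← integral_Icc_eq_integral_Ioc,
    ← integral_indicator measurableSet_Icc]
  congr 1
  ext x
  by_cases hy : x ∈ Icc (-c) c
  · rw [indicator_of_mem hy, intervalIntegral.integral_of_le (by linarith [ha x]),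
      ← integral_Icc_eq_integral_Ioc, ← integral_indicator measurableSet_Icc]
    congr 1
    ext y
    simp only [indicator, h, hy, true_and]
  · rw [indicator_of_notMem hy]
    have : (fun y => S.indicator G (x, y)) = fun _ => 0 := by
      ext y
      apply indicator_of_notMem
      rw [h]
      exact fun h => hy h.1
    simp [this]

/-- x-part of the divergence theorem. -/
lemma green_x {α β : ℝ} (hα : 0 < α) (hβ : 0 < β) {F F' : ℝ × ℝ → ℝ} (hF : Continuous F)
    (hF' : Continuous F') (hd : ∀ x y, HasDerivAt (fun t => F (t, y)) (F' (x, y)) x) :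
    ∫ p in Stadium α β, F' p = ∫ θ in (-(π / 2))..(π / 2),
      (F (α + β * cos θ, β * sin θ) - F (-(α + β * cos θ), β * sin θ)) * (β * cos θ) := by
  rw [fubini_y (S_compact hα hβ) hβ.le (a := fun y => α + √(β ^ 2 - y ^ 2))
    (fun y => by positivity) (S_slice_y hα hβ) hF']
  set g : ℝ → ℝ := fun y => F (α + √(β ^ 2 - y ^ 2), y) - F (-(α + √(β ^ 2 - y ^ 2)), y) with hg
  have e1 : ∀ y, ∫ x in (-(α + √(β ^ 2 - y ^ 2)))..(α + √(β ^ 2 - y ^ 2)), F' (x, y) = g y := by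
    intro y
    rw [intervalIntegral.integral_eq_sub_of_hasDerivAt (fun x _ => hd x y)
      ((by fun_prop : Continuous fun x => F' (x, y)).intervalIntegrable _ _)]
  simp only [e1]
  have hgc : Continuous g := by fun_prop
  have := intervalIntegral.integral_comp_mul_deriv (a := -(π / 2)) (b := π / 2)
    (f := fun θ => β * sin θ) (f' := fun θ => β * cos θ) (g := g)
    (fun θ _ => (Real.hasDerivAt_sin θ).const_mul β) (by fun_prop) hgc
  simp only [Real.sin_neg, Real.sin_pi_div_two, mul_neg, mul_one] at this
  rw [← this]
  apply intervalIntegral.integral_congr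
  intro θ hθ
  rw [uIcc_of_le (by linarith [Real.pi_pos])] at hθ
  have hc := Real.cos_nonneg_of_mem_Icc hθ
  have : √(β ^ 2 - (β * sin θ) ^ 2) = β * cos θ := by
    rw [show β ^ 2 - (β * sin θ) ^ 2 = (β * cos θ) ^ 2 by rw [mul_pow, mul_pow, Real.cos_sq']; ring]
    exact Real.sqrt_sq (by positivity)
  simp only [hg, Function.comp, this]

lemma arc_aux {α β : ℝ} (hα : 0 < α) (hβ : 0 < β) {F : ℝ × ℝ → ℝ} (hF : Continuous F) :
    ∫ x in α..(α + β), (F (x, √(β ^ 2 - (x - α) ^ 2)) - F (x, -√(β ^ 2 - (x - α) ^ 2))) =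
      ∫ θ in (-(π / 2))..(π / 2), F (α + β * cos θ, β * sin θ) * (β * sin θ) := by
  have hs : ∀ θ, √(β ^ 2 - (α + β * cos θ - α) ^ 2) = β * |sin θ| := by
    intro θ
    rw [show β ^ 2 - (α + β * cos θ - α) ^ 2 = (β * sin θ) ^ 2 by
      rw [mul_pow, Real.sin_sq]; ring, Real.sqrt_sq_eq_abs, abs_mul, abs_of_pos hβ]
  have hd : ∀ θ, HasDerivAt (fun θ => α + β * cos θ) (-(β * sin θ)) θ := by
    intro θ
    have := ((Real.hasDerivAt_cos θ).const_mul β).const_add α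
    simpa using this
  have h1 := intervalIntegral.integral_comp_mul_deriv (a := 0) (b := π / 2)
    (f := fun θ => α + β * cos θ) (f' := fun θ => -(β * sin θ))
    (g := fun x => F (x, √(β ^ 2 - (x - α) ^ 2)))
    (fun θ _ => hd θ) (by fun_prop) (by fun_prop)
  have h2 := intervalIntegral.integral_comp_mul_deriv (a := -(π / 2)) (b := 0)
    (f := fun θ => α + β * cos θ) (f' := fun θ => -(β * sin θ))
    (g := fun x => F (x, -√(β ^ 2 - (x - α) ^ 2)))
    (fun θ _ => hd θ) (by fun_prop) (by fun_prop)
  simp only [Function.comp, hs, Real.cos_neg, Real.cos_pi_div_two, Real.cos_zero, mul_zero, mul_one,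
    add_zero] at h1 h2
  rw [intervalIntegral.integral_sub (Continuous.intervalIntegrable (by fun_prop) _ _)
    (Continuous.intervalIntegrable (by fun_prop) _ _), ← h2,
    intervalIntegral.integral_symm, ← h1, ← intervalIntegral.integral_neg,
    ← intervalIntegral.integral_add_adjacent_intervals (b := (0:ℝ)) (a := -(π/2)) (c := π/2)
      (Continuous.intervalIntegrable (by fun_prop) _ _)
      (Continuous.intervalIntegrable (by fun_prop) _ _), sub_eq_add_neg, add_comm,
    ← intervalIntegral.integral_neg]
  congr 1
  · apply intervalIntegral.integral_congr
    intro θ hθ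
    rw [uIcc_of_le (by linarith [Real.pi_pos])] at hθ
    have := Real.sin_nonpos_of_nonpos_of_neg_pi_le hθ.2 (by linarith [hθ.1, Real.pi_pos])
    simp only [abs_of_nonpos this]
    ring_nf
  · apply intervalIntegral.integral_congr
    intro θ hθ
    rw [uIcc_of_le (by linarith [Real.pi_pos])] at hθ
    have := Real.sin_nonneg_of_nonneg_of_le_pi hθ.1 (by linarith [hθ.2, Real.pi_pos])
    simp only [abs_of_nonneg this]
    ring_nf

/-- y-part of the divergence theorem, for a field vanishing on the horizontal sides. -/
lemma green_y {α β : ℝ} (hα : 0 < α) (hβ : 0 < β) {F F' : ℝ × ℝ → ℝ} (hF : Continuous F)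
    (hF' : Continuous F') (hd : ∀ x y, HasDerivAt (fun t => F (x, t)) (F' (x, y)) y)
    (h0 : ∀ x ∈ Ioo (-α) α, F (x, β) = 0 ∧ F (x, -β) = 0) :
    ∫ p in Stadium α β, F' p = ∫ θ in (-(π / 2))..(π / 2),
      (F (α + β * cos θ, β * sin θ) + F (-(α + β * cos θ), β * sin θ)) * (β * sin θ) := by
  rw [fubini_x (S_compact hα hβ) (by positivity) (a := fun x => √(β ^ 2 - (max (|x| - α) 0) ^ 2))
    (fun y => by positivity) (S_slice_x hα hβ) hF']
  set b : ℝ → ℝ := fun x => √(β ^ 2 - (max (|x| - α) 0) ^ 2) with hb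
  have hbc : Continuous b := by fun_prop
  have e1 : ∀ x, ∫ y in (-(b x))..(b x), F' (x, y) = F (x, b x) - F (x, -b x) := by
    intro x
    rw [intervalIntegral.integral_eq_sub_of_hasDerivAt (fun y _ => hd x y)
      ((by fun_prop : Continuous fun y => F' (x, y)).intervalIntegrable _ _)]
  simp only [hb] at e1
  simp only [e1]
  change ∫ x in (-(α + β))..(α + β), (F (x, b x) - F (x, -b x)) = _
  have hi : ∀ s t, IntervalIntegrable (fun x => F (x, b x) - F (x, -b x)) volume s t :=
    fun s t => Continuous.intervalIntegrable (by fun_prop) _ _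
  rw [← intervalIntegral.integral_add_adjacent_intervals (hi (-(α+β)) (-α)) (hi _ _),
    ← intervalIntegral.integral_add_adjacent_intervals (hi (-α) α) (hi _ _)]
  have m : ∫ x in (-α)..α, (F (x, b x) - F (x, -b x)) = 0 := by
    rw [← intervalIntegral.integral_zero (a := -α) (b := α) (μ := volume) (E := ℝ)]
    apply intervalIntegral.integral_congr_Ioo_of_le (by linarith)
    intro x hx
    have : b x = β := by
      simp only [hb]
      rw [max_eq_right (by linarith [abs_lt.2 hx])]
      simp [Real.sqrt_sq hβ.le]
    simp [this, h0 x hx]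
  have r : ∫ x in α..(α + β), (F (x, b x) - F (x, -b x)) =
      ∫ θ in (-(π / 2))..(π / 2), F (α + β * cos θ, β * sin θ) * (β * sin θ) := by
    rw [← arc_aux hα hβ hF]
    apply intervalIntegral.integral_congr
    intro x hx
    rw [uIcc_of_le (by linarith)] at hx
    simp only [hb]
    rw [abs_of_nonneg (by linarith [hx.1]), max_eq_left (by linarith [hx.1])]
  have l : ∫ x in (-(α + β))..(-α), (F (x, b x) - F (x, -b x)) =
      ∫ θ in (-(π / 2))..(π / 2), F (-(α + β * cos θ), β * sin θ) * (β * sin θ) := by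
    rw [← arc_aux hα hβ (F := fun p => F (-p.1, p.2)) (by fun_prop),
      ← intervalIntegral.integral_comp_neg]
    apply intervalIntegral.integral_congr
    intro x hx
    rw [uIcc_of_le (by linarith)] at hx
    simp only [hb]
    rw [abs_neg, abs_of_nonneg (by linarith [hx.1]), max_eq_left (by linarith [hx.1])]
  rw [m, r, l, zero_add, ← intervalIntegral.integral_add
    (Continuous.intervalIntegrable (by fun_prop) _ _)
    (Continuous.intervalIntegrable (by fun_prop) _ _)]
  congr 1
  ext θ
  ring

lemma hasD_x {v : ℝ × ℝ → ℝ} (hv : ContDiff ℝ (⊤ : ℕ∞) v) (x y : ℝ) :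
    HasDerivAt (fun t => v (t, y)) (fderiv ℝ v (x, y) (1, 0)) x := by
  have h1 : HasFDerivAt v (fderiv ℝ v (x, y)) (x, y) :=
    (hv.differentiable (by simp) (x, y)).hasFDerivAt
  have h2 : HasDerivAt (fun t : ℝ => (t, y)) ((1 : ℝ), (0 : ℝ)) x :=
    (hasDerivAt_id x).prodMk (hasDerivAt_const x y)
  exact h1.comp_hasDerivAt x h2

lemma hasD_y {v : ℝ × ℝ → ℝ} (hv : ContDiff ℝ (⊤ : ℕ∞) v) (x y : ℝ) :
    HasDerivAt (fun t => v (x, t)) (fderiv ℝ v (x, y) (0, 1)) y := by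
  have h1 : HasFDerivAt v (fderiv ℝ v (x, y)) (x, y) :=
    (hv.differentiable (by simp) (x, y)).hasFDerivAt
  have h2 : HasDerivAt (fun t : ℝ => (x, t)) ((0 : ℝ), (1 : ℝ)) y :=
    (hasDerivAt_const y x).prodMk (hasDerivAt_id y)
  exact h1.comp_hasDerivAt y h2

lemma pdx_eq {v : ℝ × ℝ → ℝ} (hv : ContDiff ℝ (⊤ : ℕ∞) v) :
    pdx v = fun p => fderiv ℝ v p (1, 0) := by
  ext ⟨x, y⟩
  exact (hasD_x hv x y).deriv

lemma pdy_eq {v : ℝ × ℝ → ℝ} (hv : ContDiff ℝ (⊤ : ℕ∞) v) :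
    pdy v = fun p => fderiv ℝ v p (0, 1) := by
  ext ⟨x, y⟩
  exact (hasD_y hv x y).deriv

lemma pdx_smooth {v : ℝ × ℝ → ℝ} (hv : ContDiff ℝ (⊤ : ℕ∞) v) : ContDiff ℝ (⊤ : ℕ∞) (pdx v) := by
  rw [pdx_eq hv]
  exact (hv.fderiv_right (m := (⊤ : ℕ∞)) (by simp)).clm_apply contDiff_const

lemma pdy_smooth {v : ℝ × ℝ → ℝ} (hv : ContDiff ℝ (⊤ : ℕ∞) v) : ContDiff ℝ (⊤ : ℕ∞) (pdy v) := by
  rw [pdy_eq hv]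
  exact (hv.fderiv_right (m := (⊤ : ℕ∞)) (by simp)).clm_apply contDiff_const

lemma hpdx {v : ℝ × ℝ → ℝ} (hv : ContDiff ℝ (⊤ : ℕ∞) v) (x y : ℝ) :
    HasDerivAt (fun t => v (t, y)) (pdx v (x, y)) x := by
  rw [pdx_eq hv]; exact hasD_x hv x y

lemma hpdy {v : ℝ × ℝ → ℝ} (hv : ContDiff ℝ (⊤ : ℕ∞) v) (x y : ℝ) :
    HasDerivAt (fun t => v (x, t)) (pdy v (x, y)) y := by
  rw [pdy_eq hv]; exact hasD_y hv x y

lemma pd_comm {v : ℝ × ℝ → ℝ} (hv : ContDiff ℝ (⊤ : ℕ∞) v) (p : ℝ × ℝ) :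
    pdx (pdy v) p = pdy (pdx v) p := by
  rw [pdx_eq (pdy_smooth hv), pdy_eq (pdx_smooth hv), pdx_eq hv, pdy_eq hv]
  have hs := (hv.contDiffAt (x := p)).isSymmSndFDerivAt
    (by simp only [minSmoothness_of_isRCLikeNormedField]; exact WithTop.coe_le_coe.2 le_top)
  have hd : DifferentiableAt ℝ (fderiv ℝ v) p :=
    ((hv.fderiv_right (m := (⊤ : ℕ∞)) (by simp)).differentiable (by simp)) p
  have e : ∀ w w' : ℝ × ℝ, fderiv ℝ (fun q => fderiv ℝ v q w) p w' = fderiv ℝ (fderiv ℝ v) p w' w := by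
    intro w w'
    have := hd.hasFDerivAt.clm_apply (hasFDerivAt_const w p)
    rw [this.fderiv]
    simp
  simp only [e]
  exact hs _ _

/-- Chain rule along a curve. -/
lemma curve_deriv {v : ℝ × ℝ → ℝ} (hv : ContDiff ℝ (⊤ : ℕ∞) v) {c d : ℝ → ℝ} {c' d' θ : ℝ}
    (hc : HasDerivAt c c' θ) (hd : HasDerivAt d d' θ) :
    HasDerivAt (fun t => v (c t, d t)) (c' * pdx v (c θ, d θ) + d' * pdy v (c θ, d θ)) θ := by
  have h1 : HasFDerivAt v (fderiv ℝ v (c θ, d θ)) (c θ, d θ) :=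
    (hv.differentiable (by simp) _).hasFDerivAt
  have h := h1.comp_hasDerivAt θ (hc.prodMk hd)
  rw [pdx_eq hv, pdy_eq hv]
  refine h.congr_deriv ?_
  rw [show ((c', d') : ℝ × ℝ) = c' • (1, 0) + d' • (0, 1) by simp, map_add, map_smul, map_smul]
  simp

/-- Smooth global extension. -/
lemma smooth_ext {S V : Set (ℝ × ℝ)} (hS : IsCompact S) (hV : IsOpen V) (hSV : S ⊆ V)
    {u : ℝ × ℝ → ℝ} (hu : ContDiffOn ℝ (⊤ : ℕ∞) u V) :
    ∃ v : ℝ × ℝ → ℝ, ContDiff ℝ (⊤ : ℕ∞) v ∧ ∀ p ∈ S, ∀ᶠ q in nhds p, v q = u q := by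
  obtain ⟨χ, h0, h1, -⟩ := exists_contMDiffMap_zero_one_nhds_of_isClosed
    (modelWithCornersSelf ℝ (ℝ × ℝ)) (n := (⊤ : ℕ∞)) hV.isClosed_compl hS.isClosed
    (disjoint_left.2 fun p hp hp' => hp (hSV hp'))
  have hχ : ContDiff ℝ (⊤ : ℕ∞) (χ : ℝ × ℝ → ℝ) := χ.contMDiff.contDiff
  refine ⟨fun p => χ p * u p, ?_, ?_⟩
  · rw [contDiff_iff_contDiffAt]
    intro p
    by_cases hp : p ∈ V
    · exact hχ.contDiffAt.mul (hu.contDiffAt (hV.mem_nhds hp))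
    · have h := (eventually_nhdsSet_iff_forall.1 h0) p hp
      apply (contDiffAt_const (c := (0 : ℝ))).congr_of_eventuallyEq
      filter_upwards [h] with q hq
      simp [hq]
  · intro p hp
    filter_upwards [(eventually_nhdsSet_iff_forall.1 h1) p hp] with q hq
    simp [hq]

lemma pdx_congr {u v : ℝ × ℝ → ℝ} {p : ℝ × ℝ} (h : ∀ᶠ q in nhds p, v q = u q) :
    ∀ᶠ q in nhds p, pdx v q = pdx u q := by
  filter_upwards [h.eventually_nhds] with q hq
  apply Filter.EventuallyEq.deriv_eq
  have hc : Tendsto (fun t : ℝ => (t, q.2)) (nhds q.1) (nhds q) :=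
    Continuous.tendsto (f := fun t : ℝ => (t, q.2)) (by fun_prop) q.1
  exact hc.eventually hq

lemma pdy_congr {u v : ℝ × ℝ → ℝ} {p : ℝ × ℝ} (h : ∀ᶠ q in nhds p, v q = u q) :
    ∀ᶠ q in nhds p, pdy v q = pdy u q := by
  filter_upwards [h.eventually_nhds] with q hq
  apply Filter.EventuallyEq.deriv_eq
  have hc : Tendsto (fun t : ℝ => (q.1, t)) (nhds q.2) (nhds q) :=
    Continuous.tendsto (f := fun t : ℝ => (q.1, t)) (by fun_prop) q.2
  exact hc.eventually hq

lemma arc_mem {α β : ℝ} (hα : 0 < α) (hβ : 0 < β) {θ : ℝ} (hθ : θ ∈ Icc (-(π / 2)) (π / 2)) :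
    (α + β * cos θ, β * sin θ) ∈ Stadium α β ∧ (-(α + β * cos θ), β * sin θ) ∈ Stadium α β ∧
    (α + β * cos θ, β * sin θ) ∈ StadiumBoundary α β ∧
    (-(α + β * cos θ), β * sin θ) ∈ StadiumBoundary α β := by
  have hc : 0 ≤ β * cos θ := mul_nonneg hβ.le (Real.cos_nonneg_of_mem_Icc hθ)
  have hs := Real.sin_sq_add_cos_sq θ
  have e : (β * cos θ) ^ 2 + (β * sin θ) ^ 2 = β ^ 2 := by
    linear_combination β ^ 2 * hs
  have ha : |α + β * cos θ| = α + β * cos θ := abs_of_nonneg (by linarith)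
  refine ⟨Or.inr (Or.inl ⟨?_, ?_⟩), Or.inr (Or.inr ⟨?_, ?_⟩), Or.inr ⟨?_, ?_⟩, Or.inr ⟨?_, ?_⟩⟩
  all_goals simp only [abs_neg, ha]
  all_goals linarith

lemma core {α β : ℝ} (hα : 0 < α) (hβ : 0 < β) {v : ℝ × ℝ → ℝ} (hv : ContDiff ℝ (⊤ : ℕ∞) v)
    (hb : ∀ p ∈ StadiumBoundary α β, v p = 0) (k : ℝ) :
    (∫ p in Stadium α β, (v p) ^ 2) ≤
      24 * (α + β) ^ 4 * (∫ p in Stadium α β, (lap v p - k * v p) ^ 2) +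
      8 * (α + β) ^ 3 / β * bdryIntW α β (fun p n => (|p.1| - α) * (nderiv v p n) ^ 2) := by
  set A := α + β with hA
  have hApos : 0 < A := by positivity
  have hvx := pdx_smooth hv
  have hvy := pdy_smooth hv
  have cv := hv.continuous
  have cx := hvx.continuous
  have cy := hvy.continuous
  have cxx := (pdx_smooth hvx).continuous
  have cxy := (pdy_smooth hvx).continuous
  have cyy := (pdy_smooth hvy).continuous
  -- the fields
  set G1 : ℝ × ℝ → ℝ := fun p => 4 * (p.1 * v p ^ 2) + 8 * A ^ 2 *
    (p.1 * (pdx v p ^ 2 - pdy v p ^ 2 + k * v p ^ 2) + v p * pdx v p) with hG1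
  set G2 : ℝ × ℝ → ℝ := fun p => 8 * A ^ 2 * (2 * (p.1 * (pdx v p * pdy v p)) + v p * pdy v p)
    with hG2
  set D1 : ℝ × ℝ → ℝ := fun p => 4 * (v p ^ 2 + 2 * p.1 * v p * pdx v p) + 8 * A ^ 2 *
    ((pdx v p ^ 2 - pdy v p ^ 2 + k * v p ^ 2) +
      p.1 * (2 * pdx v p * pdx (pdx v) p - 2 * pdy v p * pdy (pdx v) p + k * (2 * v p * pdx v p)) +
      (pdx v p ^ 2 + v p * pdx (pdx v) p)) with hD1
  set D2 : ℝ × ℝ → ℝ := fun p => 8 * A ^ 2 *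
    (2 * (p.1 * (pdy (pdx v) p * pdy v p + pdx v p * pdy (pdy v) p)) +
      (pdy v p ^ 2 + v p * pdy (pdy v) p)) with hD2
  have d1 : ∀ x y, HasDerivAt (fun t => G1 (t, y)) (D1 (x, y)) x := by
    intro x y
    have a0 := hpdx hv x y
    have a1 := hpdx hvx x y
    have a2 := hpdx hvy x y
    rw [pd_comm hv] at a2
    have ax := hasDerivAt_id x
    have := ((ax.mul (a0.pow 2)).const_mul 4).add (((ax.mul (((a1.pow 2).sub (a2.pow 2)).add
      ((a0.pow 2).const_mul k))).add (a0.mul a1)).const_mul (8 * A ^ 2))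
    refine this.congr_deriv ?_
    simp [hD1]
    ring
  have d2 : ∀ x y, HasDerivAt (fun t => G2 (x, t)) (D2 (x, y)) y := by
    intro x y
    have a0 := hpdy hv x y
    have a1 := hpdy hvx x y
    have a2 := hpdy hvy x y
    have := ((((a1.mul a2).const_mul x).const_mul 2).add (a0.mul a2)).const_mul (8 * A ^ 2)
    refine this.congr_deriv ?_
    simp only [hD2]
    ring
  -- boundary relations
  have hflat : ∀ x ∈ Ioo (-α) α, G2 (x, β) = 0 ∧ G2 (x, -β) = 0 := by
    intro x hx
    have key : ∀ y, (y = β ∨ y = -β) → G2 (x, y) = 0 := by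
      intro y hy
      have z0 : v (x, y) = 0 := hb _ (Or.inl ⟨(abs_lt.2 hx).le, hy⟩)
      have z1 : pdx v (x, y) = 0 := by
        have h1 : (fun t => v (t, y)) =ᶠ[nhds x] fun _ => 0 := by
          filter_upwards [isOpen_Ioo.mem_nhds hx] with t ht
          exact hb _ (Or.inl ⟨(abs_lt.2 ht).le, hy⟩)
        have := h1.deriv_eq
        simpa [pdx] using this
      simp [hG2, z0, z1]
    exact ⟨key _ (Or.inl rfl), key _ (Or.inr rfl)⟩
  have g1 := green_x hα hβ (F := G1) (F' := D1) (by fun_prop) (by fun_prop) d1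
  have g2 := green_y hα hβ (F := G2) (F' := D2) (by fun_prop) (by fun_prop) d2 hflat
  have hSc := S_compact hα hβ
  have int : ∀ {g : ℝ × ℝ → ℝ}, Continuous g → IntegrableOn g (Stadium α β) :=
    fun hg => hg.continuousOn.integrableOn_compact hSc
  have cl : Continuous (lap v) := by
    unfold lap; fun_prop
  have step1 : (∫ p in Stadium α β, (v p) ^ 2) ≤
      ∫ p in Stadium α β, (24 * A ^ 4 * (lap v p - k * v p) ^ 2 + (D1 p + D2 p)) := by
    apply setIntegral_mono_on (int (by fun_prop)) (int (by fun_prop)) hSc.measurableSet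
    intro p hp
    have hx : p.1 ^ 2 ≤ A ^ 2 := by
      have := ((S_slice_x hα hβ p).1 hp).1
      exact sq_le_sq' this.1 this.2
    simp only [hD1, hD2]
    have hf : pdy (pdy v) p = -(lap v p - k * v p) - k * v p - pdx (pdx v) p := by
      simp only [lap]; ring
    rw [hf]
    generalize lap v p - k * v p = f
    generalize pdx (pdx v) p = vxx
    generalize pdy (pdx v) p = vxy
    generalize pdx v p = vx
    generalize pdy v p = vy
    generalize v p = w
    generalize p.1 = x at *
    -- goal: w^2 ≤ 24 A^4 f^2 + 4 (w^2 + 2 x w vx) + 16 A^2 (vx^2 - f (x vx + w/2))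
    have q1 : 0 ≤ (w + 2 * (x * vx)) ^ 2 := sq_nonneg _
    have q2 : 0 ≤ A ^ 2 * (vx - x * f) ^ 2 := by positivity
    have q3 : 0 ≤ (w - 4 * A ^ 2 * f) ^ 2 := sq_nonneg _
    have q4 : 0 ≤ (A ^ 2 - x ^ 2) * vx ^ 2 := mul_nonneg (by linarith) (sq_nonneg _)
    have q5 : 0 ≤ A ^ 2 * (A ^ 2 - x ^ 2) * f ^ 2 :=
      mul_nonneg (mul_nonneg (sq_nonneg _) (by linarith)) (sq_nonneg _)
    nlinarith
  have step2 : ∫ p in Stadium α β, (24 * A ^ 4 * (lap v p - k * v p) ^ 2 + (D1 p + D2 p)) =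
      24 * A ^ 4 * (∫ p in Stadium α β, (lap v p - k * v p) ^ 2) +
      ((∫ p in Stadium α β, D1 p) + ∫ p in Stadium α β, D2 p) := by
    rw [integral_add (int (by fun_prop)) (int (by fun_prop)), integral_const_mul,
      integral_add (int (by fun_prop)) (int (by fun_prop))]
  have step3 : (∫ p in Stadium α β, D1 p) + ∫ p in Stadium α β, D2 p ≤
      8 * A ^ 3 / β * bdryIntW α β (fun p n => (|p.1| - α) * (nderiv v p n) ^ 2) := by
    rw [g1, g2, ← intervalIntegral.integral_add
      (Continuous.intervalIntegrable (by fun_prop) _ _)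
      (Continuous.intervalIntegrable (by fun_prop) _ _)]
    unfold bdryIntW
    rw [← intervalIntegral.integral_const_mul, ← intervalIntegral.integral_const_mul]
    apply intervalIntegral.integral_mono_on_of_le_Ioo (by linarith [Real.pi_pos])
      (Continuous.intervalIntegrable (by fun_prop) _ _)
      (Continuous.intervalIntegrable (by unfold nderiv; fun_prop) _ _)
    intro θ hθ
    obtain ⟨-, -, m1, m2⟩ := arc_mem hα hβ (Ioo_subset_Icc_self hθ)
    have z1 := hb _ m1
    have z2 := hb _ m2
    have hc : 0 ≤ cos θ := Real.cos_nonneg_of_mem_Icc (Ioo_subset_Icc_self hθ)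
    have hc1 := Real.cos_le_one θ
    have hsc := Real.sin_sq_add_cos_sq θ
    have dc : HasDerivAt (fun θ => α + β * cos θ) (-(β * sin θ)) θ := by
      simpa using ((Real.hasDerivAt_cos θ).const_mul β).const_add α
    have ds : HasDerivAt (fun θ => β * sin θ) (β * cos θ) θ := (Real.hasDerivAt_sin θ).const_mul β
    have t1 : -(β * sin θ) * pdx v (α + β * cos θ, β * sin θ) +
        β * cos θ * pdy v (α + β * cos θ, β * sin θ) = 0 := by
      rw [← (curve_deriv hv dc ds).deriv]
      have h1 : (fun t => v (α + β * cos t, β * sin t)) =ᶠ[nhds θ] fun _ => 0 := by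
        filter_upwards [isOpen_Ioo.mem_nhds hθ] with t ht
        exact hb _ (arc_mem hα hβ (Ioo_subset_Icc_self ht)).2.2.1
      simpa using h1.deriv_eq
    have t2 : -(-(β * sin θ)) * pdx v (-(α + β * cos θ), β * sin θ) +
        β * cos θ * pdy v (-(α + β * cos θ), β * sin θ) = 0 := by
      have dn : HasDerivAt (fun θ => -(α + β * cos θ)) (-(-(β * sin θ))) θ := dc.neg
      rw [← (curve_deriv hv dn ds).deriv]
      have h1 : (fun t => v (-(α + β * cos t), β * sin t)) =ᶠ[nhds θ] fun _ => 0 := by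
        filter_upwards [isOpen_Ioo.mem_nhds hθ] with t ht
        exact hb _ (arc_mem hα hβ (Ioo_subset_Icc_self ht)).2.2.2
      simpa using h1.deriv_eq
    have ha : |α + β * cos θ| = α + β * cos θ := abs_of_nonneg (by positivity)
    simp only [hG1, hG2, nderiv, abs_neg, ha, z1, z2]
    generalize pdx v (α + β * cos θ, β * sin θ) = a at *
    generalize pdy v (α + β * cos θ, β * sin θ) = b at *
    generalize pdx v (-(α + β * cos θ), β * sin θ) = a' at *
    generalize pdy v (-(α + β * cos θ), β * sin θ) = b' at *
    generalize cos θ = c at *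
    generalize sin θ = s at *
    have r1 : c * b = s * a := mul_left_cancel₀ hβ.ne' (by linarith)
    have r2 : c * b' = -s * a' := mul_left_cancel₀ hβ.ne' (by linarith)
    obtain ⟨g, rfl, rfl⟩ : ∃ g, a = c * g ∧ b = s * g :=
      ⟨c * a + s * b, by linear_combination (-a) * hsc - s * r1,
        by linear_combination (-b) * hsc + c * r1⟩
    obtain ⟨g', rfl, rfl⟩ : ∃ g, a' = -c * g ∧ b' = s * g :=
      ⟨-c * a' + s * b', by linear_combination (-a') * hsc + s * r2,
        by linear_combination (-b') * hsc + c * r2⟩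
    have e1 : c * (c * g) + s * (s * g) = g := by linear_combination g * hsc
    have e2 : -c * (-c * g') + s * (s * g') = g' := by linear_combination g' * hsc
    rw [e1, e2]
    have hl : α + β * c ≤ A := by rw [hA]; nlinarith
    have fin : 8 * A ^ 2 * β * c * (α + β * c) * (g ^ 2 + g' ^ 2) ≤
        8 * A ^ 2 * β * c * A * (g ^ 2 + g' ^ 2) := by gcongr
    calc _ = 8 * A ^ 2 * β * c * (α + β * c) * (g ^ 2 + g' ^ 2) := by
          have hs2 : s ^ 2 = 1 - c ^ 2 := by linarith
          ring_nf
          simp only [hs2]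
          ring
      _ ≤ _ := fin
      _ = _ := by field_simp; ring
  rw [step2] at step1
  linarith

/-- there is `C > 0` depending only on `α, β` such that every real Dirichlet
quasimode datum satisfies `‖u‖²_{L²(S)} ≤ C (∫_{∂S ∩ W} w |∂_N u|² dl + ‖f‖²_{L²(S)})`. -/
theorem stmt10 (α β : ℝ) (hα : 0 < α) (hβ : 0 < β) :
    ∃ C > 0, ∀ d : QMDatum α β,
      (∫ p in Stadium α β, (d.u p) ^ 2) ≤
        C * (bdryIntW α β (fun p n => (|p.1| - α) * (nderiv d.u p n) ^ 2) +
             (∫ p in Stadium α β, (d.f p) ^ 2)) := by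
  refine ⟨24 * (α + β) ^ 4 + 8 * (α + β) ^ 3 / β, by positivity, fun d => ?_⟩
  obtain ⟨V, hV, hSV, hu⟩ := d.smooth
  obtain ⟨v, hv, hvu⟩ := smooth_ext (S_compact hα hβ) hV hSV hu
  have hms := (S_compact hα hβ).measurableSet
  have e0 : ∀ p ∈ Stadium α β, v p = d.u p := fun p hp => (hvu p hp).self_of_nhds
  have hbS : StadiumBoundary α β ⊆ Stadium α β := by
    rintro ⟨x, y⟩ (⟨h1, h2⟩ | ⟨h1, h2⟩)
    · left
      refine ⟨abs_le.1 h1, ?_⟩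
      rcases h2 with h2 | h2 <;> simp only at h2 <;> subst h2 <;> constructor <;> simp <;> linarith
    · right
      simp only at h1 h2
      rcases le_total 0 x with hx | hx
      · rw [abs_of_nonneg hx] at h1 h2
        exact Or.inl ⟨h1.le, h2⟩
      · rw [abs_of_nonpos hx] at h1 h2
        refine Or.inr ⟨?_, ?_⟩ <;> simp only <;> nlinarith
  have hc := core hα hβ hv (fun p hp => (e0 p (hbS hp)).trans (d.dirichlet p hp)) (d.lam ^ 2)
  have i1 : ∫ p in Stadium α β, (v p) ^ 2 = ∫ p in Stadium α β, (d.u p) ^ 2 :=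
    setIntegral_congr_fun hms fun p hp => by simp only [e0 p hp]
  have i2 : ∫ p in Stadium α β, (lap v p - d.lam ^ 2 * v p) ^ 2 =
      ∫ p in Stadium α β, (d.f p) ^ 2 :=
    setIntegral_congr_fun hms fun p hp => by
      have h := hvu p hp
      have hl : lap v p = lap d.u p := by
        unfold lap
        rw [(pdx_congr (pdx_congr h)).self_of_nhds, (pdy_congr (pdy_congr h)).self_of_nhds]
      simp only [e0 p hp, hl, d.eqn p hp]
  have hnd : ∀ p ∈ Stadium α β, ∀ n, nderiv v p n = nderiv d.u p n := by
    intro p hp n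
    unfold nderiv
    rw [(pdx_congr (hvu p hp)).self_of_nhds, (pdy_congr (hvu p hp)).self_of_nhds]
  have i3 : bdryIntW α β (fun p n => (|p.1| - α) * (nderiv v p n) ^ 2) =
      bdryIntW α β (fun p n => (|p.1| - α) * (nderiv d.u p n) ^ 2) := by
    unfold bdryIntW
    congr 1
    apply intervalIntegral.integral_congr
    intro θ hθ
    rw [uIcc_of_le (by linarith [Real.pi_pos])] at hθ
    obtain ⟨m1, m2, -, -⟩ := arc_mem hα hβ hθ
    simp only [hnd _ m1, hnd _ m2]
  rw [i1, i2, i3] at hc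
  have hf0 : 0 ≤ ∫ p in Stadium α β, (d.f p) ^ 2 := integral_nonneg fun p => sq_nonneg _
  have hb0 : 0 ≤ bdryIntW α β (fun p n => (|p.1| - α) * (nderiv d.u p n) ^ 2) := by
    unfold bdryIntW
    apply mul_nonneg hβ.le
    apply intervalIntegral.integral_nonneg (by linarith [Real.pi_pos])
    intro θ hθ
    have hc : 0 ≤ β * cos θ := mul_nonneg hβ.le (Real.cos_nonneg_of_mem_Icc hθ)
    have ha : |α + β * cos θ| = α + β * cos θ := abs_of_nonneg (by positivity)
    simp only [abs_neg, ha, add_sub_cancel_left]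
    positivity
  have k1 : 0 ≤ 24 * (α + β) ^ 4 := by positivity
  have k2 : 0 ≤ 8 * (α + β) ^ 3 / β := by positivity
  nlinarith [mul_nonneg k1 hb0, mul_nonneg k2 hf0]
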